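/- Let f : ℕ⁺ → ℕ⁺ be a non-decreasing function satisfying f(1) = 1, f(n) ≤ n for all n, and f(n) → +∞. Then there exists a one-sided infinite word x ∈ {a,b}^ℕ with p_x(n) = O(n² f(n)) such that for every positive integer k and every language S ⊆ {a,b}* with Fac(x) ⊆ S^k, one has p*_S(n) = Ω(Σ_{p=1}^{⌊(n−2)/(2(2k−1))⌋} f(p)). Consequently d_0(x) = d*_1(x) = +∞. -/

import Mathlib

open scoped ENNReal Pointwise

universe u

variable {A : Type u}

/-- The factor of `x` of length `n` starting at position `i`. -/
def wordSeg (x : ℕ → A) (i n : ℕ) : List A := (List.range n).map fun j => x (i + j)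

/-- The set of finite factors of a one-sided infinite word (including the empty word). -/
def Fac (x : ℕ → A) : Set (List A) := {u | ∃ i n, u = wordSeg x i n}

/-- The factor of a two-sided word `x` of length `n` starting at position `i`. -/
def wordSegZ (x : ℤ → A) (i : ℤ) (n : ℕ) : List A := (List.range n).map fun j => x (i + j)

/-- The set of finite factors of a two-sided infinite word (including the empty word). -/
def FacZ (x : ℤ → A) : Set (List A) := {u | ∃ (i : ℤ) (n : ℕ), u = wordSegZ x i n}

/-- The complexity of a language: the number of words of length `n` in it. -/
noncomputable def complexity (L : Set (List A)) (n : ℕ) : ℕ :=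
  {u ∈ L | u.length = n}.ncard

/-- The accumulative complexity `p*_L(n) = Σ_{i=0}^{n} p_L(i)`. -/
noncomputable def accComplexity (L : Set (List A)) (n : ℕ) : ℕ :=
  ∑ i ∈ Finset.range (n + 1), complexity L i

/-- Concatenation (product) of two languages. -/
def prodL (S T : Set (List A)) : Set (List A) := {w | ∃ s ∈ S, ∃ t ∈ T, w = s ++ t}

/-- `powL S k` = `S^k`, the set of concatenations of `k` elements of `S`. -/
def powL (S : Set (List A)) : ℕ → Set (List A)
  | 0 => {([] : List A)}
  | k + 1 => prodL (powL S k) S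

/-- `f(n) = O(n^α)`. -/
def PolyBound (f : ℕ → ℕ) (α : ℝ) : Prop :=
  ∃ C : ℝ, ∀ n : ℕ, 1 ≤ n → (f n : ℝ) ≤ C * (n : ℝ) ^ α

/-- The `α`-dimension `d_α(L)`: infimum of the integers `k ≥ 1` such that `L ⊆ S^k`
for some language `S` with `p_S(n) = O(n^α)`, with `inf ∅ = ⊤`. -/
noncomputable def polyDim (α : ℝ) (L : Set (List A)) : ℕ∞ :=
  sInf {k : ℕ∞ | ∃ m : ℕ, k = m ∧ 1 ≤ m ∧
    ∃ S : Set (List A), PolyBound (complexity S) α ∧ L ⊆ powL S m}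

/-- The accumulative `α`-dimension `d*_α(L)`. -/
noncomputable def polyDimStar (α : ℝ) (L : Set (List A)) : ℕ∞ :=
  sInf {k : ℕ∞ | ∃ m : ℕ, k = m ∧ 1 ≤ m ∧
    ∃ S : Set (List A), PolyBound (accComplexity S) α ∧ L ⊆ powL S m}

/-- The cost `c(L)`: infimum of the `α ≥ 0` with `d_α(L) < +∞`, with `inf ∅ = ⊤`. -/
noncomputable def cost (L : Set (List A)) : ℝ≥0∞ :=
  sInf {a : ℝ≥0∞ | ∃ α : ℝ, 0 ≤ α ∧ a = ENNReal.ofReal α ∧ polyDim α L ≠ ⊤}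

/-- A one-sided word is ultimately periodic if it is of the form `u v v v ⋯`. -/
def UltimatelyPeriodic (x : ℕ → A) : Prop :=
  ∃ N p : ℕ, 0 < p ∧ ∀ n : ℕ, N ≤ n → x (n + p) = x n

/-- A two-sided word is eventually periodic if it is periodic far enough to the right
and far enough to the left. -/
def EventuallyPeriodicZ (x : ℤ → A) : Prop :=
  (∃ p : ℕ, 0 < p ∧ ∃ N : ℤ, ∀ n : ℤ, N ≤ n → x (n + p) = x n) ∧
  (∃ p : ℕ, 0 < p ∧ ∃ N : ℤ, ∀ n : ℤ, n ≤ N → x (n - p) = x n)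

/-- A one-sided word is recurrent if each of its factors occurs infinitely often. -/
def Recurrent (x : ℕ → A) : Prop :=
  ∀ u ∈ Fac x, ∀ N : ℕ, ∃ i : ℕ, N ≤ i ∧ u = wordSeg x i u.length

/-- `u` is a right special factor for the language `F`. -/
def RightSpecial (F : Set (List A)) (u : List A) : Prop :=
  u ∈ F ∧ ∃ a b : A, a ≠ b ∧ u ++ [a] ∈ F ∧ u ++ [b] ∈ F

/-- `M` is a `D`-marker set for a word with factor set `F`: every factor of length
at least `D n` contains a factor of length `n` belonging to `M`. -/
def MarkerSet (D : ℕ) (M F : Set (List A)) : Prop :=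
  ∀ n : ℕ, 1 ≤ n → ∀ u ∈ F, D * n ≤ u.length →
    ∃ v ∈ M, v.length = n ∧ v <:+: u

/-- A language is factorial if it contains all factors of its members. -/
def IsFactorial (S : Set (List A)) : Prop := ∀ u ∈ S, ∀ v : List A, v <:+: u → v ∈ S

/-- The bound `Σ_{k ∈ I_n ∩ ℕ} p_M(2^k)(1 + 4 p(3n)/2^k)` where
`I_n = (log₂(n/(2D)), log₂(2n)]`, i.e. the sum is over natural `k` with
`n/(2D) < 2^k ≤ 2n`. -/
noncomputable def markerBound (M F : Set (List A)) (D n : ℕ) : ℝ :=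
  ∑ k ∈ (Finset.range (2 * n + 2)).filter (fun k => n < 2 * D * 2 ^ k ∧ 2 ^ k ≤ 2 * n),
    (complexity M (2 ^ k) : ℝ) * (1 + 4 * (complexity F (3 * n) : ℝ) / 2 ^ k)

-- The word `u = ∏_{i=1}^{∞} a b^i = a b a b b a b b b ⋯` over `{a,b}`, with
-- `a = false`, `b = true`: position `n` carries an `a` iff `n = (i-1)(i+2)/2` for some
-- `i ≥ 1`, i.e. iff `2n = m(m+3)` for some `m ≥ 0`.
open Classical in
noncomputable def uWord (n : ℕ) : Bool :=
  if ∃ m : ℕ, 2 * n = m * (m + 3) then false else true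

/-!
The word is `x = ∏_{p ≥ 1} ∏_{q = 1}^{f p} (a ^ q b ^ p) ^ p`. A factor of length `n` starting in a
block with `p ≥ n` meets at most one run of `a`, so there are `O(n²)` of these; a factor starting in
a block with `p < n` is determined by `p`, by `q ≤ f n` and by `O(n)` possible offsets (modulo the
period `p + q`, or from the end of the block).

Conversely, if `Fac x ⊆ S ^ k`, then a factor of length `2 (2k - 1) p + 2` of a block
`(a ^ q b ^ p) ^ p` with `p ≥ 4k` has a piece in `S` long enough to contain both `a b ^ p a` and
`b a ^ q b`. Such a piece determines `(p, q)`, so pieces for different pairs are different, and there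
are `f p` pairs for each `p`.
-/

section Words

lemma length_wordSeg (x : ℕ → A) (i n : ℕ) : (wordSeg x i n).length = n := by
  simp [wordSeg]

lemma wordSeg_eq_wordSeg_iff {x y : ℕ → A} {i j n : ℕ} :
    wordSeg x i n = wordSeg y j n ↔ ∀ t < n, x (i + t) = y (j + t) := by
  simp [wordSeg]

lemma exists_eq_wordSeg_of_infix {x : ℕ → A} {i n : ℕ} {u : List A} (h : u <:+: wordSeg x i n) :
    ∃ j, j + u.length ≤ n ∧ u = wordSeg x (i + j) u.length := by
  obtain ⟨l, r, hlr⟩ := h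
  have hlen : l.length + u.length + r.length = n := by
    simpa [length_wordSeg, add_assoc] using congrArg List.length hlr
  refine ⟨l.length, by omega, List.ext_getElem (length_wordSeg ..).symm fun t ht _ => ?_⟩
  have hget : (wordSeg x i n)[l.length + t]? = u[t]? := by
    rw [← hlr, List.append_assoc, List.getElem?_append_right (by omega), Nat.add_sub_cancel_left,
      List.getElem?_append_left ht]
  have hlt : l.length + t < n := by omega
  simpa [wordSeg, hlt, ht, add_assoc, eq_comm] using hget

lemma complexity_Fac_le_card {x : ℕ → A} {n : ℕ} {T : Finset (List A)}
    (h : ∀ i, wordSeg x i n ∈ T) : complexity (Fac x) n ≤ T.card := by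
  rw [complexity, ← Set.ncard_coe_finset]
  refine Set.ncard_le_ncard ?_ T.finite_toSet
  rintro u ⟨⟨i, m, rfl⟩, hm⟩
  rw [length_wordSeg] at hm
  exact hm ▸ h i

lemma card_le_accComplexity [Finite A] {S : Set (List A)} {n : ℕ} {T : Finset (List A)}
    (hT : ∀ u ∈ T, u ∈ S ∧ u.length ≤ n) : T.card ≤ accComplexity S n := by
  classical
  have hmaps : ∀ u ∈ T, u.length ∈ Finset.range (n + 1) := fun u hu =>
    Finset.mem_range_succ_iff.2 (hT u hu).2
  rw [Finset.card_eq_sum_card_fiberwise hmaps]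
  refine Finset.sum_le_sum fun i _ => ?_
  rw [complexity, ← Set.ncard_coe_finset]
  refine Set.ncard_le_ncard (fun u hu => ?_)
    ((List.finite_length_eq A i).subset fun u hu => hu.2)
  obtain ⟨huT, hui⟩ := Finset.mem_filter.1 hu
  exact ⟨(hT u huT).1, hui⟩

lemma exists_infix_mem_of_mem_powL {S : Set (List A)} {k : ℕ} (hk : k ≠ 0) {w : List A}
    (hw : w ∈ powL S k) : ∃ s ∈ S, s <:+: w ∧ w.length ≤ k * s.length := by
  induction k, Nat.one_le_iff_ne_zero.2 hk using Nat.le_induction generalizing w with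
  | base =>
    obtain ⟨_, rfl, s, hs, rfl⟩ := hw
    exact ⟨_, hs, List.infix_rfl, by simp⟩
  | succ k hk ih =>
    obtain ⟨t, ht, s, hs, rfl⟩ := hw
    obtain ⟨s', hs', hinfix, hle⟩ := ih (by omega) ht
    simp only [List.length_append, add_one_mul]
    rcases le_total s'.length s.length with h | h
    · refine ⟨s, hs, (List.suffix_append t s).isInfix, ?_⟩
      gcongr
      exact hle.trans (by gcongr)
    · exact ⟨s', hs', hinfix.trans (List.prefix_append t s).isInfix, by gcongr⟩

lemma PolyBound.accComplexity_add_one {L : Set (List A)} {α : ℝ} (hα : 0 ≤ α)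
    (h : PolyBound (complexity L) α) : PolyBound (accComplexity L) (α + 1) := by
  obtain ⟨C, hC⟩ := h
  have hC0 : 0 ≤ C := by simpa using (Nat.cast_nonneg _).trans (hC 1 le_rfl)
  refine ⟨C + complexity L 0, fun n hn => ?_⟩
  have hn' : (1 : ℝ) ≤ n := by exact_mod_cast hn
  have hterm : ∀ i ∈ Finset.range n, (complexity L (i + 1) : ℝ) ≤ C * (n : ℝ) ^ α := by
    intro i hi
    have hin : ((i + 1 : ℕ) : ℝ) ≤ n := by exact_mod_cast Finset.mem_range.1 hi
    exact (hC (i + 1) (by omega)).trans (by gcongr)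
  calc (accComplexity L n : ℝ)
      = ∑ i ∈ Finset.range n, (complexity L (i + 1) : ℝ) + complexity L 0 := by
        rw [accComplexity, Finset.sum_range_succ']
        push_cast
        rfl
    _ ≤ n * (C * (n : ℝ) ^ α) + complexity L 0 * (n : ℝ) ^ (α + 1) := by
        gcongr
        · simpa using Finset.sum_le_card_nsmul _ _ _ hterm
        · exact le_mul_of_one_le_right (Nat.cast_nonneg _)
            (Real.one_le_rpow hn' (by linarith))
    _ = (C + complexity L 0) * (n : ℝ) ^ (α + 1) := by
        rw [Real.rpow_add_one (by positivity)]
        ring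

lemma polyDimStar_add_one_le_polyDim {α : ℝ} (hα : 0 ≤ α) (L : Set (List A)) :
    polyDimStar (α + 1) L ≤ polyDim α L := by
  refine sInf_le_sInf ?_
  rintro _ ⟨m, rfl, hm, S, hS, hL⟩
  exact ⟨m, rfl, hm, S, hS.accComplexity_add_one hα, hL⟩

lemma polyDimStar_eq_top {α : ℝ} {L : Set (List A)}
    (h : ∀ k, 1 ≤ k → ∀ S : Set (List A), L ⊆ powL S k → ¬ PolyBound (accComplexity S) α) :
    polyDimStar α L = ⊤ := by
  refine sInf_eq_top.2 ?_
  rintro _ ⟨k, rfl, hk, S, hS, hL⟩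
  exact absurd hS (h k hk S hL)

end Words

section Runs

/-- A maximal run of the letter `c` in `x`: the positions `i + 1, …, i + m` carry `c`, and their two
neighbours do not. Indexing by the left neighbour keeps all positions natural numbers. -/
def IsRun (x : ℕ → A) (c : A) (i m : ℕ) : Prop :=
  x i ≠ c ∧ (∀ j < m, x (i + 1 + j) = c) ∧ x (i + 1 + m) ≠ c

lemma IsRun.length_unique {x : ℕ → A} {c : A} {i m m' : ℕ} (h : IsRun x c i m)
    (h' : IsRun x c i m') : m = m' := by
  rcases lt_trichotomy m m' with hlt | heq | hlt
  · exact absurd (h'.2.1 m hlt) h.2.2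
  · exact heq
  · exact absurd (h.2.1 m' hlt) h'.2.2

lemma IsRun.of_wordSeg_eq {x y : ℕ → A} {c : A} {i j n t m : ℕ}
    (hxy : wordSeg x i n = wordSeg y j n) (h : IsRun x c (i + t) m) (ht : t + m + 1 < n) :
    IsRun y c (j + t) m := by
  have hval : ∀ s < n, y (j + s) = x (i + s) := fun s hs =>
    (wordSeg_eq_wordSeg_iff.1 hxy s hs).symm
  obtain ⟨hleft, hmid, hright⟩ := h
  simp only [add_assoc] at hmid hright
  refine ⟨by rwa [hval t (by omega)], fun l hl => ?_, ?_⟩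
  · simpa only [add_assoc, hval (t + (1 + l)) (by omega)] using hmid l hl
  · simpa only [add_assoc, hval (t + (1 + m)) (by omega)] using hright

/-- The periodic word `(a ^ q b ^ p) ^ ω`, with `a = true` and `b = false`. -/
def perWord (p q t : ℕ) : Bool := decide (t % (p + q) < q)

lemma perWord_mod_add (p q t j : ℕ) : perWord p q (t % (p + q) + j) = perWord p q (t + j) := by
  simp only [perWord, Nat.mod_add_mod]

lemma perWord_of_lt {p q t : ℕ} (h : t < p + q) : perWord p q t = decide (t < q) := by
  rw [perWord, Nat.mod_eq_of_lt h]

lemma perWord_add_period (p q t : ℕ) : perWord p q (t + (p + q)) = perWord p q t := by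
  simp only [perWord, Nat.add_mod_right]

lemma perWord_swap {p q : ℕ} (h : 0 < p + q) (t : ℕ) : perWord q p (t + p) = !perWord p q t := by
  have hlt : t % (p + q) < p + q := Nat.mod_lt _ h
  have hq : perWord p q t = decide (t % (p + q) < q) := rfl
  rw [hq, ← perWord_mod_add q p t p, add_comm q p]
  rcases lt_or_ge (t % (p + q)) q with hr | hr
  · rw [perWord_of_lt (by omega)]
    simp [hr]
  · rw [show t % (p + q) + p = t % (p + q) - q + (q + p) by omega, perWord_add_period,
      perWord_of_lt (by omega), ← decide_not, decide_eq_decide]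
    omega

lemma isRun_true_perWord_iff {p q t m : ℕ} (h : 0 < p + q) :
    IsRun (perWord p q) true t m ↔ IsRun (perWord q p) false (t + p) m := by
  simp only [IsRun, add_right_comm _ p, perWord_swap h, ne_eq, Bool.not_eq_false',
    Bool.not_eq_true]

lemma isRun_false_perWord {p q t : ℕ} (hq : 0 < q) (ht : t % (p + q) = q - 1) :
    IsRun (perWord p q) false t p := by
  have hval : ∀ j, perWord p q (t + 1 + j) = perWord p q (q + j) := fun j => by
    rw [add_assoc, ← perWord_mod_add, ht, ← add_assoc, Nat.sub_add_cancel hq]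
  refine ⟨?_, fun j hj => ?_, ?_⟩
  · simp only [perWord, ht, ne_eq, decide_eq_false_iff_not, not_not]
    omega
  · rw [hval, perWord_of_lt (by omega)]
    simp
  · rw [hval, add_comm q p, ← zero_add (p + q), perWord_add_period, perWord_of_lt (by omega)]
    simpa using hq.ne'

lemma isRun_true_perWord {p q t : ℕ} (hp : 0 < p) (ht : t % (p + q) = p + q - 1) :
    IsRun (perWord p q) true t q := by
  rw [isRun_true_perWord_iff (by omega)]
  refine isRun_false_perWord hp ?_
  rw [add_comm q p, ← Nat.mod_add_mod, ht, show p + q - 1 + p = p - 1 + (p + q) by omega,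
    Nat.add_mod_right, Nat.mod_eq_of_lt (by omega)]

lemma IsRun.eq_of_false_perWord {p q t m : ℕ} (hm : 0 < m) (h : IsRun (perWord p q) false t m) :
    m = p := by
  have hleft : t % (p + q) < q := by simpa [perWord] using h.1
  have hright : ¬ (t + 1) % (p + q) < q := by simpa [perWord] using h.2.1 0 hm
  refine h.length_unique (isRun_false_perWord (by omega) ?_)
  by_contra hne
  rw [← Nat.mod_add_mod, Nat.mod_eq_of_lt (by omega)] at hright
  omega

lemma IsRun.eq_of_true_perWord {p q t m : ℕ} (hpq : 0 < p + q) (hm : 0 < m)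
    (h : IsRun (perWord p q) true t m) : m = q :=
  ((isRun_true_perWord_iff hpq).1 h).eq_of_false_perWord hm

lemma exists_add_mod_eq (c : ℕ) {r d : ℕ} (hr : r < d) : ∃ i < d, (c + i) % d = r := by
  have hc : c % d < d := Nat.mod_lt _ (by omega)
  refine ⟨(r + (d - c % d)) % d, Nat.mod_lt _ (by omega), ?_⟩
  rw [Nat.add_mod_mod, ← Nat.mod_add_mod, show c % d + (r + (d - c % d)) = r + d by omega,
    Nat.add_mod_right, Nat.mod_eq_of_lt hr]

/-- The word `u` is a factor of `(a ^ q b ^ p) ^ ω` in which both a complete run `b ^ p` and a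
complete run `a ^ q` occur together with their two neighbours. Such a `u` determines `p` and `q`,
which is what makes the pieces of different blocks distinct. -/
def SpansRuns (p q : ℕ) (u : List Bool) : Prop :=
  ∃ c i j, u = wordSeg (perWord p q) c u.length ∧
    IsRun (perWord p q) false (c + i) p ∧ i + p + 1 < u.length ∧
    IsRun (perWord p q) true (c + j) q ∧ j + q + 1 < u.length

lemma SpansRuns.unique {p q p' q' : ℕ} {u : List Bool} (hp : 0 < p) (hq : 0 < q)
    (h : SpansRuns p q u) (h' : SpansRuns p' q' u) : p = p' ∧ q = q' := by
  obtain ⟨c, i, j, hu, hb, hi, ha, hj⟩ := h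
  obtain ⟨c', i', j', hu', -⟩ := h'
  have heq : wordSeg (perWord p q) c u.length = wordSeg (perWord p' q') c' u.length :=
    hu.symm.trans hu'
  have hpp' : p = p' := (hb.of_wordSeg_eq heq hi).eq_of_false_perWord hp
  exact ⟨hpp', (ha.of_wordSeg_eq heq hj).eq_of_true_perWord (by omega) hq⟩

lemma spansRuns_wordSeg {p q c i j n : ℕ} (hp : 0 < p) (hq : 0 < q)
    (hi : (c + i) % (p + q) = q - 1) (hin : i + p + 1 < n)
    (hj : (c + j) % (p + q) = p + q - 1) (hjn : j + q + 1 < n) :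
    SpansRuns p q (wordSeg (perWord p q) c n) := by
  rw [SpansRuns, length_wordSeg]
  exact ⟨c, i, j, rfl, isRun_false_perWord hq hi, hin, isRun_true_perWord hp hj, hjn⟩

lemma spansRuns_wordSeg_of_three_mul_lt {p q n : ℕ} (hq : 0 < q) (hqp : q ≤ p) (hn : 3 * p < n)
    (c : ℕ) : SpansRuns p q (wordSeg (perWord p q) c n) := by
  obtain ⟨i, hi, hci⟩ := exists_add_mod_eq c (show q - 1 < p + q by omega)
  obtain ⟨j, hj, hcj⟩ := exists_add_mod_eq c (show p + q - 1 < p + q by omega)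
  exact spansRuns_wordSeg (by omega) hq hci (by omega) hcj (by omega)

lemma spansRuns_wordSeg_of_period_end {p q : ℕ} (hq : 0 < q) (hqp : q ≤ p) :
    SpansRuns p q (wordSeg (perWord p q) (p + q - 1) (2 * p + 2)) := by
  refine spansRuns_wordSeg (i := q) (j := 0) (by omega) hq ?_ (by omega) ?_ (by omega)
  · rw [show p + q - 1 + q = q - 1 + (p + q) by omega, Nat.add_mod_right]
    exact Nat.mod_eq_of_lt (by omega)
  · exact Nat.mod_eq_of_lt (by omega)

-- For `k = 1` the piece is only known to have length `2 p + 2`, which is enough because the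
-- factor starts at the last letter of a period.
lemma exists_mem_spansRuns_of_mem_powL {S : Set (List Bool)} {k p q : ℕ} (hk : 1 ≤ k)
    (hq : 0 < q) (hqp : q ≤ p)
    (hS : wordSeg (perWord p q) (p + q - 1) (2 * (2 * k - 1) * p + 2) ∈ powL S k) :
    ∃ s ∈ S, SpansRuns p q s ∧ s.length ≤ 2 * (2 * k - 1) * p + 2 := by
  obtain ⟨s, hs, hinfix, hlong⟩ := exists_infix_mem_of_mem_powL (by omega) hS
  obtain ⟨j, hj, hseg⟩ := exists_eq_wordSeg_of_infix hinfix
  rw [length_wordSeg] at hlong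
  refine ⟨s, hs, ?_, by omega⟩
  rw [hseg]
  rcases hk.eq_or_lt with rfl | hk
  · have hlen : s.length = 2 * p + 2 := by omega
    obtain rfl : j = 0 := by omega
    rw [add_zero, hlen]
    exact spansRuns_wordSeg_of_period_end hq hqp
  · refine spansRuns_wordSeg_of_three_mul_lt hq hqp ?_ _
    obtain ⟨l, rfl⟩ := Nat.exists_eq_add_of_le hk
    by_contra! hshort
    have hle : (2 + l) * s.length ≤ (2 + l) * (3 * p) := Nat.mul_le_mul_left _ hshort
    rw [show 2 * (2 * (2 + l) - 1) = 4 * l + 6 by omega] at hlong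
    nlinarith

end Runs

section BlockWord

/-- The reading position `r` inside the block `(a ^ q b ^ p) ^ p`. Reading states are iterated to
generate the infinite word, so that no position of a block in that word has to be computed. -/
structure BlockState where
  p : ℕ
  q : ℕ
  r : ℕ

namespace BlockState

/-- The reading position after one more letter: the blocks are ordered by `p`, and for equal `p` by
`q ≤ f p`. -/
def next (f : ℕ → ℕ) : BlockState → BlockState
  | ⟨p, q, r⟩ =>
    if r + 1 < (p + q) * p then ⟨p, q, r + 1⟩
    else if q < f p then ⟨p, q + 1, 0⟩ else ⟨p + 1, 1, 0⟩

/-- The reading positions that occur in the infinite word: `r` points inside one of its blocks. -/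
structure IsValid (f : ℕ → ℕ) (s : BlockState) : Prop where
  p_pos : 0 < s.p
  q_pos : 0 < s.q
  q_le : s.q ≤ f s.p
  r_lt : s.r < (s.p + s.q) * s.p

end BlockState

open BlockState

/-- The infinite word read from the state `s` on. -/
def wordFrom (f : ℕ → ℕ) (s : BlockState) (n : ℕ) : Bool :=
  let t := (next f)^[n] s
  perWord t.p t.q t.r

/-- The infinite word `∏_{p ≥ 1} ∏_{q = 1}^{f p} (a ^ q b ^ p) ^ p`. -/
def blockWord (f : ℕ → ℕ) : ℕ → Bool := wordFrom f ⟨1, 1, 0⟩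

variable {f : ℕ → ℕ}

lemma wordFrom_add (s : BlockState) (i n : ℕ) :
    wordFrom f s (i + n) = wordFrom f ((next f)^[i] s) n := by
  rw [wordFrom, add_comm, Function.iterate_add_apply]
  rfl

lemma wordSeg_wordFrom (s : BlockState) (i n : ℕ) :
    wordSeg (wordFrom f s) i n = wordSeg (wordFrom f ((next f)^[i] s)) 0 n := by
  simp only [wordSeg_eq_wordSeg_iff, wordFrom_add, zero_add, implies_true]

namespace BlockState

lemma IsValid.next {s : BlockState} (hpos : ∀ p, 0 < p → 0 < f p) (hs : s.IsValid f) :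
    (s.next f).IsValid f := by
  obtain ⟨p, q, r⟩ := s
  rw [BlockState.next]
  split_ifs with hr hq
  · exact ⟨hs.p_pos, hs.q_pos, hs.q_le, hr⟩
  · exact ⟨hs.p_pos, Nat.succ_pos _, hq, Nat.mul_pos (by simp) hs.p_pos⟩
  · exact ⟨Nat.succ_pos _, one_pos, hpos _ (Nat.succ_pos _), by positivity⟩

lemma IsValid.iterate_next {s : BlockState} (hpos : ∀ p, 0 < p → 0 < f p) (hs : s.IsValid f)
    (n : ℕ) : ((BlockState.next f)^[n] s).IsValid f :=
  Function.Iterate.rec (IsValid f) hs (fun _ h => h.next hpos) n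

lemma iterate_next_of_lt {p q r j : ℕ} (h : r + j < (p + q) * p) :
    (next f)^[j] ⟨p, q, r⟩ = ⟨p, q, r + j⟩ := by
  induction j with
  | zero => rfl
  | succ j ih =>
    rw [Function.iterate_succ_apply', ih (by omega), next, if_pos (by omega), add_assoc]

lemma iterate_next_of_eq {p q r j : ℕ} (hj : 0 < j) (h : r + j = (p + q) * p) :
    (next f)^[j] ⟨p, q, r⟩ = if q < f p then ⟨p, q + 1, 0⟩ else ⟨p + 1, 1, 0⟩ := by
  obtain ⟨i, rfl⟩ := Nat.exists_eq_add_one_of_ne_zero hj.ne'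
  rw [Function.iterate_succ_apply', iterate_next_of_lt (by omega), next,
    if_neg (by omega)]

lemma exists_iterate_next_eq_of_start {p i : ℕ} (hp : 0 < p)
    (hi : (next f)^[i] ⟨1, 1, 0⟩ = ⟨p, 1, 0⟩) {q : ℕ} (hq : 0 < q) (hqf : q ≤ f p) :
    ∃ j, (next f)^[j] ⟨1, 1, 0⟩ = ⟨p, q, 0⟩ := by
  induction q, hq using Nat.le_induction with
  | base => exact ⟨i, hi⟩
  | succ q _ ih =>
    obtain ⟨j, hj⟩ := ih (by omega)
    refine ⟨(p + q) * p + j, ?_⟩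
    rw [Function.iterate_add_apply, hj, iterate_next_of_eq (by positivity) (zero_add _),
      if_pos (by omega)]

lemma exists_iterate_next_eq (hpos : ∀ p, 0 < p → 0 < f p) {p q : ℕ} (hp : 0 < p) (hq : 0 < q)
    (hqf : q ≤ f p) : ∃ i, (next f)^[i] ⟨1, 1, 0⟩ = ⟨p, q, 0⟩ := by
  induction p, hp using Nat.le_induction generalizing q with
  | base => exact exists_iterate_next_eq_of_start (i := 0) one_pos rfl hq hqf
  | succ p hp ih =>
    obtain ⟨i, hi⟩ := ih (hpos p hp) le_rfl
    refine exists_iterate_next_eq_of_start (i := (p + f p) * p + i) (by omega) ?_ hq hqf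
    rw [Function.iterate_add_apply, hi, iterate_next_of_eq (by positivity) (zero_add _),
      if_neg (lt_irrefl _)]

end BlockState

lemma wordFrom_of_lt {p q r j : ℕ} (h : r + j < (p + q) * p) :
    wordFrom f ⟨p, q, r⟩ j = perWord p q (r + j) := by
  simp only [wordFrom, iterate_next_of_lt h]

lemma wordSeg_wordFrom_of_le {p q r i n : ℕ} (h : r + i + n ≤ (p + q) * p) :
    wordSeg (wordFrom f ⟨p, q, r⟩) i n = wordSeg (perWord p q) (r + i) n := by
  refine wordSeg_eq_wordSeg_iff.2 fun t ht => ?_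
  rw [wordFrom_of_lt (by omega), add_assoc]

lemma wordSeg_perWord_mem_Fac (hpos : ∀ p, 0 < p → 0 < f p) {p q i n : ℕ} (hp : 0 < p)
    (hq : 0 < q) (hqf : q ≤ f p) (hn : i + n ≤ (p + q) * p) :
    wordSeg (perWord p q) i n ∈ Fac (blockWord f) := by
  obtain ⟨i₀, hi₀⟩ := exists_iterate_next_eq hpos hp hq hqf
  refine ⟨i₀ + i, n, ?_⟩
  rw [blockWord, wordSeg_wordFrom, add_comm, Function.iterate_add_apply, hi₀, ← wordSeg_wordFrom,
    wordSeg_wordFrom_of_le (by omega), zero_add]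

lemma add_le_mul_of_mod_add_le {d m r j : ℕ} (hr : r < d * m) (hj : r % d + j ≤ d) :
    r + j ≤ d * m := by
  have hdiv : r / d + 1 ≤ m := Nat.div_lt_of_lt_mul hr
  calc r + j = d * (r / d) + (r % d + j) := by rw [← add_assoc, Nat.div_add_mod]
    _ ≤ d * (r / d + 1) := by rw [mul_add_one]; gcongr
    _ ≤ d * m := by gcongr

lemma wordFrom_of_mod_add_lt {p q r j : ℕ} (hr : r < (p + q) * p)
    (hj : r % (p + q) + j < p + q) :
    wordFrom f ⟨p, q, r⟩ j = decide (r % (p + q) + j < q) := by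
  rw [wordFrom_of_lt (add_le_mul_of_mod_add_le (j := j + 1) hr hj), ← perWord_mod_add,
    perWord_of_lt hj]

namespace BlockState

lemma exists_iterate_next_period_start {p q r d : ℕ} (hr : r < (p + q) * p) (hd : 0 < d)
    (hrd : r % (p + q) + d = p + q) :
    ∃ p' q' r', (next f)^[d] ⟨p, q, r⟩ = ⟨p', q', r'⟩ ∧ p ≤ p' ∧ r' % (p' + q') = 0 := by
  have hle := add_le_mul_of_mod_add_le hr hrd.le
  rcases hle.lt_or_eq with hlt | heq
  · refine ⟨p, q, _, iterate_next_of_lt hlt, le_rfl, ?_⟩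
    rw [← Nat.mod_add_mod, hrd, Nat.mod_self]
  · rw [iterate_next_of_eq hd heq]
    split_ifs
    · exact ⟨p, q + 1, 0, rfl, le_rfl, Nat.zero_mod _⟩
    · exact ⟨p + 1, 1, 0, rfl, p.le_succ, Nat.zero_mod _⟩

end BlockState

/-- The word `b ^ i a ^ (e - i) b ^ ω`, whose prefixes are the factors with at most one run of
`a`. -/
def intervalWord (i e j : ℕ) : Bool := decide (i ≤ j ∧ j < e)

lemma exists_wordSeg_wordFrom_eq_intervalWord (hpos : ∀ p, 0 < p → 0 < f p)
    {s : BlockState} (hs : s.IsValid f) {n : ℕ} (hn : n ≤ s.p) :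
    ∃ i ≤ n, ∃ e ≤ n, wordSeg (wordFrom f s) 0 n = wordSeg (intervalWord i e) 0 n := by
  obtain ⟨p, q, r⟩ := s
  have hq : 0 < q := hs.q_pos
  have hr : r < (p + q) * p := hs.r_lt
  have hmod : r % (p + q) < p + q := Nat.mod_lt _ (by omega)
  simp only at hn
  simp only [wordSeg_eq_wordSeg_iff, zero_add, intervalWord]
  by_cases hc : r % (p + q) < q
  · refine ⟨0, n.zero_le, min (q - r % (p + q)) n, min_le_right _ _, fun j hj => ?_⟩
    rw [wordFrom_of_mod_add_lt hr (by omega), decide_eq_decide]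
    omega
  · obtain ⟨d, hd⟩ := Nat.exists_eq_add_of_lt hmod
    obtain ⟨p', q', r', hnext, hp', hr'⟩ :=
      exists_iterate_next_period_start (f := f) hr d.succ_pos hd.symm
    have hr'_lt : r' < (p' + q') * p' := (hnext ▸ hs.iterate_next hpos (d + 1)).r_lt
    refine ⟨min (d + 1) n, min_le_right _ _, min (d + 1 + q') n, min_le_right _ _, fun j hj => ?_⟩
    rcases lt_or_ge j (d + 1) with hjd | hjd
    · rw [wordFrom_of_mod_add_lt hr (by omega), decide_eq_decide]
      omega
    · obtain ⟨l, rfl⟩ := Nat.exists_eq_add_of_le hjd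
      rw [wordFrom_add, hnext, wordFrom_of_mod_add_lt hr'_lt (by omega), decide_eq_decide, hr']
      omega

/-- The factors of length `n` of the periodic words `(a ^ q b ^ p) ^ ω` with `p < n`. -/
def periodicFactors (f : ℕ → ℕ) (n : ℕ) : Finset (List Bool) :=
  (Finset.range n ×ˢ Finset.Icc 1 (f n) ×ˢ Finset.range (2 * n)).image
    fun (p, q, c) => wordSeg (perWord p q) c n

/-- The factors of length `n` starting at one of the last `n` positions of a block with `p < n`. -/
def crossingFactors (f : ℕ → ℕ) (n : ℕ) : Finset (List Bool) :=
  (Finset.range n ×ˢ Finset.Icc 1 (f n) ×ˢ Finset.range n).image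
    fun (p, q, d) => wordSeg (wordFrom f ⟨p, q, (p + q) * p - 1 - d⟩) 0 n

/-- The words of length `n` of the form `b ^ i a ^ j b ^ l`. -/
def intervalFactors (n : ℕ) : Finset (List Bool) :=
  (Finset.range (n + 1) ×ˢ Finset.range (n + 1)).image
    fun (i, e) => wordSeg (intervalWord i e) 0 n

lemma wordSeg_wordFrom_mem_of_lt (hmono : MonotoneOn f (Set.Ici 1)) (hle : ∀ p, 0 < p → f p ≤ p)
    {s : BlockState} (hs : s.IsValid f) {n : ℕ} (hn : s.p < n) :
    wordSeg (wordFrom f s) 0 n ∈ periodicFactors f n ∪ crossingFactors f n := by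
  obtain ⟨p, q, r⟩ := s
  obtain ⟨hp, hq, hqf, hr⟩ := hs
  simp only at hp hq hqf hr hn
  have hqn : q ≤ f n := hqf.trans (hmono (Set.mem_Ici.2 hp) (Set.mem_Ici.2 (by omega)) hn.le)
  have hqp : q ≤ p := hqf.trans (hle p hp)
  rw [Finset.mem_union]
  rcases le_or_gt (r + n) ((p + q) * p) with hin | hout
  · have hmod : r % (p + q) < p + q := Nat.mod_lt _ (by omega)
    refine .inl (Finset.mem_image.2 ⟨(p, q, r % (p + q)), ?_, ?_⟩)
    · simp only [Finset.mem_product, Finset.mem_range, Finset.mem_Icc]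
      omega
    · rw [wordSeg_wordFrom_of_le (by omega), wordSeg_eq_wordSeg_iff]
      exact fun t _ => perWord_mod_add p q r t
  · refine .inr (Finset.mem_image.2 ⟨(p, q, (p + q) * p - 1 - r), ?_, ?_⟩)
    · simp only [Finset.mem_product, Finset.mem_range, Finset.mem_Icc]
      omega
    · dsimp only
      rw [show (p + q) * p - 1 - ((p + q) * p - 1 - r) = r by omega]

lemma wordSeg_blockWord_mem (hpos : ∀ p, 0 < p → 0 < f p) (hmono : MonotoneOn f (Set.Ici 1))
    (hle : ∀ p, 0 < p → f p ≤ p) (i n : ℕ) :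
    wordSeg (blockWord f) i n ∈ periodicFactors f n ∪ crossingFactors f n ∪ intervalFactors n := by
  have hstart : (⟨1, 1, 0⟩ : BlockState).IsValid f :=
    ⟨one_pos, one_pos, hpos 1 one_pos, by norm_num⟩
  have hvalid := hstart.iterate_next hpos i
  rw [blockWord, wordSeg_wordFrom, Finset.mem_union]
  rcases lt_or_ge ((next f)^[i] ⟨1, 1, 0⟩).p n with hn | hn
  · exact .inl (wordSeg_wordFrom_mem_of_lt hmono hle hvalid hn)
  · obtain ⟨a, ha, e, he, heq⟩ := exists_wordSeg_wordFrom_eq_intervalWord hpos hvalid hn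
    refine .inr (Finset.mem_image.2 ⟨(a, e), ?_, heq.symm⟩)
    exact Finset.mem_product.2 ⟨Finset.mem_range_succ_iff.2 ha, Finset.mem_range_succ_iff.2 he⟩

lemma complexity_Fac_blockWord_le (hpos : ∀ p, 0 < p → 0 < f p)
    (hmono : MonotoneOn f (Set.Ici 1)) (hle : ∀ p, 0 < p → f p ≤ p) {n : ℕ} (hn : 0 < n) :
    complexity (Fac (blockWord f)) n ≤ 7 * n ^ 2 * f n := by
  have hperiodic : (periodicFactors f n).card ≤ n * (f n * (2 * n)) :=
    Finset.card_image_le.trans (by simp)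
  have hcrossing : (crossingFactors f n).card ≤ n * (f n * n) :=
    Finset.card_image_le.trans (by simp)
  have hinterval : (intervalFactors n).card ≤ (n + 1) * (n + 1) :=
    Finset.card_image_le.trans (by simp)
  have hsq : (n + 1) * (n + 1) ≤ (n + n) * (n + n) * f n :=
    (Nat.mul_le_mul (by omega) (by omega)).trans (Nat.le_mul_of_pos_right _ (hpos n hn))
  calc complexity (Fac (blockWord f)) n
      ≤ (periodicFactors f n ∪ crossingFactors f n ∪ intervalFactors n).card :=
        complexity_Fac_le_card fun i => wordSeg_blockWord_mem hpos hmono hle i n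
    _ ≤ n * (f n * (2 * n)) + n * (f n * n) + (n + 1) * (n + 1) := by
        grw [Finset.card_union_le, Finset.card_union_le, hperiodic, hcrossing, hinterval]
    _ ≤ n * (f n * (2 * n)) + n * (f n * n) + (n + n) * (n + n) * f n :=
        Nat.add_le_add_left hsq _
    _ = 7 * n ^ 2 * f n := by ring

lemma exists_mem_spansRuns_of_Fac_blockWord_subset (hpos : ∀ p, 0 < p → 0 < f p)
    (hle : ∀ p, 0 < p → f p ≤ p) {S : Set (List Bool)} {k p q : ℕ} (hk : 1 ≤ k)
    (hS : Fac (blockWord f) ⊆ powL S k) (hp : 4 * k ≤ p) (hq : 0 < q) (hqf : q ≤ f p) :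
    ∃ s ∈ S, SpansRuns p q s ∧ s.length ≤ 2 * (2 * k - 1) * p + 2 := by
  have hqp : q ≤ p := hqf.trans (hle p (by omega))
  refine exists_mem_spansRuns_of_mem_powL hk hq hqp
    (hS (wordSeg_perWord_mem_Fac hpos (by omega) hq hqf ?_))
  obtain ⟨l, rfl⟩ := Nat.exists_eq_add_of_le' hk
  have hfit : (p + q) * (4 * (l + 1)) ≤ (p + q) * p := Nat.mul_le_mul_left _ hp
  rw [show 2 * (2 * (l + 1) - 1) = 4 * l + 2 by omega]
  nlinarith [Nat.sub_le (p + q) 1]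

lemma sum_Icc_le_accComplexity (hpos : ∀ p, 0 < p → 0 < f p) (hle : ∀ p, 0 < p → f p ≤ p)
    {S : Set (List Bool)} {k n P : ℕ} (hk : 1 ≤ k) (hS : Fac (blockWord f) ⊆ powL S k)
    (hP : 2 * (2 * k - 1) * P + 2 ≤ n) :
    ∑ p ∈ Finset.Icc (4 * k) P, f p ≤ accComplexity S n := by
  classical
  let I : Finset (Σ _ : ℕ, ℕ) := (Finset.Icc (4 * k) P).sigma fun p => Finset.Icc 1 (f p)
  have hmem : ∀ z ∈ I, (4 * k ≤ z.1 ∧ z.1 ≤ P) ∧ 0 < z.2 ∧ z.2 ≤ f z.1 := fun z hz => by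
    rwa [Finset.mem_sigma, Finset.mem_Icc, Finset.mem_Icc] at hz
  have hex : ∀ z ∈ I, ∃ s ∈ S, SpansRuns z.1 z.2 s ∧ s.length ≤ 2 * (2 * k - 1) * z.1 + 2 := by
    intro z hz
    obtain ⟨⟨hp, -⟩, hq, hqf⟩ := hmem z hz
    exact exists_mem_spansRuns_of_Fac_blockWord_subset hpos hle hk hS hp hq hqf
  choose! piece hpieceS hpiece hlength using hex
  have hinj : Set.InjOn piece (I : Set (Σ _ : ℕ, ℕ)) := by
    intro z hz z' hz' heq
    obtain ⟨⟨hp, -⟩, hq, -⟩ := hmem z hz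
    obtain ⟨h₁, h₂⟩ := (hpiece z hz).unique (by omega) hq (heq ▸ hpiece z' hz')
    exact Sigma.ext h₁ (heq_of_eq h₂)
  calc ∑ p ∈ Finset.Icc (4 * k) P, f p = I.card := by simp [I]
    _ = (I.image piece).card := (Finset.card_image_of_injOn hinj).symm
    _ ≤ accComplexity S n := card_le_accComplexity <| Finset.forall_mem_image.2 fun z hz =>
        ⟨hpieceS z hz, (hlength z hz).trans (hP.trans' (by grw [(hmem z hz).1.2]))⟩

end BlockWord

section PartialSums

lemma sum_Icc_one_le_mul_sum_Icc {f : ℕ → ℕ} (hmono : MonotoneOn f (Set.Ici 1)) {m P : ℕ}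
    (hm : 1 ≤ m) (hmP : m ≤ P) :
    ∑ p ∈ Finset.Icc 1 P, f p ≤ m * ∑ p ∈ Finset.Icc m P, f p := by
  have hinit : ∑ p ∈ Finset.Ico 1 m, f p ≤ (m - 1) * f m := by
    simpa using Finset.sum_le_card_nsmul (Finset.Ico 1 m) f (f m) fun p hp =>
      hmono (Finset.mem_Ico.1 hp).1 hm (Finset.mem_Ico.1 hp).2.le
  have hfirst : f m ≤ ∑ p ∈ Finset.Icc m P, f p :=
    Finset.single_le_sum (fun _ _ => Nat.zero_le _) (Finset.left_mem_Icc.2 hmP)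
  calc ∑ p ∈ Finset.Icc 1 P, f p
      = ∑ p ∈ Finset.Ico 1 m, f p + ∑ p ∈ Finset.Icc m P, f p := by
        simp only [← Finset.Ico_add_one_right_eq_Icc]
        exact (Finset.sum_Ico_consecutive f hm (by omega)).symm
    _ ≤ (m - 1) * ∑ p ∈ Finset.Icc m P, f p + ∑ p ∈ Finset.Icc m P, f p := by
        gcongr
        exact hinit.trans (by gcongr)
    _ = m * ∑ p ∈ Finset.Icc m P, f p := by
        rw [← add_one_mul, Nat.sub_add_cancel hm]

lemma eventually_mul_le_sum_Icc {f : ℕ → ℕ} (hf : Filter.Tendsto f Filter.atTop Filter.atTop)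
    (C : ℕ) : ∀ᶠ P in Filter.atTop, C * P ≤ ∑ p ∈ Finset.Icc 1 P, f p := by
  obtain ⟨N, hN⟩ := Filter.tendsto_atTop_atTop.1 hf (2 * C)
  filter_upwards [Filter.eventually_ge_atTop (2 * N)] with P hP
  calc C * P ≤ (P - P / 2) * (2 * C) := by
        rw [mul_left_comm, mul_comm C, ← mul_assoc]
        gcongr
        omega
    _ ≤ ∑ p ∈ Finset.Ioc (P / 2) P, f p := by
        simpa using Finset.card_nsmul_le_sum (Finset.Ioc (P / 2) P) f (2 * C) fun p hp =>
          hN p (by have := (Finset.mem_Ioc.1 hp).1; omega)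
    _ ≤ ∑ p ∈ Finset.Icc 1 P, f p :=
        Finset.sum_le_sum_of_subset fun p hp => by
          simp only [Finset.mem_Ioc, Finset.mem_Icc] at hp ⊢
          omega

lemma not_polyBound_one_of_mul_sum_Icc_le {f a : ℕ → ℕ}
    (hf : Filter.Tendsto f Filter.atTop Filter.atTop) {K : ℝ} (hK : 0 < K) {c N : ℕ} (hc : 0 < c)
    (h : ∀ n ≥ N, K * ∑ p ∈ Finset.Icc 1 ((n - 2) / c), (f p : ℝ) ≤ a n) : ¬ PolyBound a 1 := by
  rintro ⟨C, hC⟩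
  obtain ⟨M, hM⟩ := exists_nat_gt (|C| * (c + 2) / K)
  obtain ⟨P, hsum, hPN⟩ :=
    ((eventually_mul_le_sum_Icc hf M).and (Filter.eventually_ge_atTop (N + 1))).exists
  have hP : (1 : ℝ) ≤ P := by exact_mod_cast (by omega : 1 ≤ P)
  have hlower := h (c * P + 2) (by nlinarith)
  rw [Nat.add_sub_cancel, Nat.mul_div_cancel_left _ hc] at hlower
  have hupper := hC (c * P + 2) (by omega)
  rw [Real.rpow_one] at hupper
  have hlt : |C| * (c + 2) * P < |C| * (c + 2) * P := calc
    |C| * (c + 2) * P < K * M * P := by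
      gcongr ?_ * _
      rwa [div_lt_iff₀' hK] at hM
    _ ≤ K * ∑ p ∈ Finset.Icc 1 P, (f p : ℝ) := by
      rw [mul_assoc]
      gcongr
      exact_mod_cast hsum
    _ ≤ C * (c * P + 2 : ℕ) := hlower.trans hupper
    _ ≤ |C| * (c * P + 2 * P) := by
      push_cast
      gcongr
      · exact le_abs_self C
      · linarith
    _ = |C| * (c + 2) * P := by ring
  exact lt_irrefl _ hlt

end PartialSums

lemma exists_mul_sum_Icc_le_accComplexity {f : ℕ → ℕ} (hpos : ∀ p, 0 < p → 0 < f p)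
    (hmono : MonotoneOn f (Set.Ici 1)) (hle : ∀ p, 0 < p → f p ≤ p) {k : ℕ} (hk : 1 ≤ k)
    {S : Set (List Bool)} (hS : Fac (blockWord f) ⊆ powL S k) :
    ∃ K : ℝ, 0 < K ∧ ∃ N : ℕ, ∀ n : ℕ, N ≤ n →
      K * (∑ p ∈ Finset.Icc 1 ((n - 2) / (2 * (2 * k - 1))), (f p : ℝ)) ≤
        (accComplexity S n : ℝ) := by
  have hk' : (0 : ℝ) < 4 * k := by positivity
  refine ⟨1 / (4 * k), by positivity, 4 * k * (2 * (2 * k - 1)) + 2, fun n hn => ?_⟩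
  set P := (n - 2) / (2 * (2 * k - 1))
  have hPn : 2 * (2 * k - 1) * P ≤ n - 2 := Nat.mul_div_le _ _
  have hkP : 4 * k ≤ P := (Nat.le_div_iff_mul_le (by omega)).2 (by omega)
  have hsum : ∑ p ∈ Finset.Icc 1 P, f p ≤ 4 * k * accComplexity S n :=
    (sum_Icc_one_le_mul_sum_Icc hmono (by omega) hkP).trans <| by
      gcongr
      exact sum_Icc_le_accComplexity hpos hle hk hS (by omega)
  rw [one_div, inv_mul_le_iff₀ hk']
  exact_mod_cast hsum

/-- for any non-decreasing `f` with `f(1) = 1`, `f(n) ≤ n` and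
`f(n) → ∞`, there is `x ∈ {a,b}^ℕ` with `p_x(n) = O(n² f(n))` such that whenever
`Fac(x) ⊆ S^k`, `p*_S(n) = Ω(Σ_{p=1}^{⌊(n-2)/(2(2k-1))⌋} f(p))`; consequently
`d₀(x) = d*₁(x) = +∞`. -/
theorem stmt18 (f : ℕ → ℕ) (hf1 : f 1 = 1)
    (hmono : ∀ m n : ℕ, 1 ≤ m → m ≤ n → f m ≤ f n)
    (hle : ∀ n : ℕ, 1 ≤ n → f n ≤ n)
    (htend : ∀ M : ℕ, ∃ N : ℕ, ∀ n : ℕ, N ≤ n → M ≤ f n) :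
    ∃ x : ℕ → Bool,
      (∃ C : ℝ, ∀ n : ℕ, 1 ≤ n →
        (complexity (Fac x) n : ℝ) ≤ C * (n : ℝ) ^ 2 * f n) ∧
      (∀ k : ℕ, 1 ≤ k → ∀ S : Set (List Bool), Fac x ⊆ powL S k →
        ∃ K : ℝ, 0 < K ∧ ∃ N : ℕ, ∀ n : ℕ, N ≤ n →
          K * (∑ p ∈ Finset.Icc 1 ((n - 2) / (2 * (2 * k - 1))), (f p : ℝ)) ≤
            (accComplexity S n : ℝ)) ∧
      polyDim 0 (Fac x) = ⊤ ∧ polyDimStar 1 (Fac x) = ⊤ := by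
  have hpos : ∀ n, 0 < n → 0 < f n := fun n hn => hf1.ge.trans (hmono 1 n le_rfl hn)
  have hmonoOn : MonotoneOn f (Set.Ici 1) := fun m hm n _ hmn => hmono m n hm hmn
  have hstar : polyDimStar 1 (Fac (blockWord f)) = ⊤ := polyDimStar_eq_top fun k hk S hS => by
    obtain ⟨K, hK, N, hN⟩ := exists_mul_sum_Icc_le_accComplexity hpos hmonoOn hle hk hS
    exact not_polyBound_one_of_mul_sum_Icc_le (Filter.tendsto_atTop_atTop.2 htend) hK (by omega) hN
  refine ⟨blockWord f, ⟨7, fun n hn => ?_⟩, fun k hk S hS =>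
    exists_mul_sum_Icc_le_accComplexity hpos hmonoOn hle hk hS, ?_, hstar⟩
  · exact_mod_cast complexity_Fac_blockWord_le hpos hmonoOn hle hn
  · have hdim := polyDimStar_add_one_le_polyDim le_rfl (Fac (blockWord f))
    rwa [zero_add, hstar, top_le_iff] at hdim
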